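/- arXiv:math/0303043 — 3 statements merged into one kernel-verified Lean document; each statement's English description precedes it below -/
import Mathlib

section
/- For every prime p ≥ 7, the multiple harmonic sum H(1,2,1;2p-1) = Σ_{1 ≤ k₁ < k₂ < k₃ ≤ 2p-1} 1/(k₁·k₂²·k₃) satisfies v_p(H(1,2,1;2p-1)) ≥ 1; that is, p divides the numerator of H(1,2,1;2p-1). -/
open Classical in
/-- Multiple harmonic sum `H(s₁,…,s_l; n) = ∑_{1 ≤ k₁ < ⋯ < k_l ≤ n} k₁^{-s₁} ⋯ k_l^{-s_l}`,
encoded via strictly increasing tuples of indices in `{1,…,n}` (an empty sum is `0`,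
and `mhs [] n = 1`). -/
noncomputable def mhs (s : List ℕ) (n : ℕ) : ℚ :=
  ∑ k ∈ Finset.univ.filter
      (fun k : Fin s.length → Fin (n + 1) =>
        StrictMono k ∧ ∀ i, 1 ≤ (k i : ℕ)),
    ∏ i, 1 / (((k i : ℕ) : ℚ) ^ s.get i)

open Classical in
/-- `p`-restricted multiple harmonic sum `H*(s; n)`: same sum with all indices
not divisible by `p`. -/
noncomputable def mhsStar (p : ℕ) (s : List ℕ) (n : ℕ) : ℚ :=
  ∑ k ∈ Finset.univ.filter
      (fun k : Fin s.length → Fin (n + 1) =>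
        StrictMono k ∧ ∀ i, 1 ≤ (k i : ℕ) ∧ ¬ p ∣ (k i : ℕ)),
    ∏ i, 1 / (((k i : ℕ) : ℚ) ^ s.get i)

/-!
The only index below `2 p` divisible by `p` is `p` itself. Write `h` and `h'` for the sums over the
indices below `p` and over those strictly between `p` and `2 p`. Whether, and where, the index `p`
occurs splits `H(1,2,1; 2 p - 1)` into `p`-integral products of such sums and two singular terms,
`(h(1,2) + h'(2,1)) / p` and `h(1) h'(1) / p ^ 2`. The second is harmless by Wolstenholme's
congruence `h(1) ≡ 0` modulo `p ^ 2` together with `h'(1) ≡ 0` modulo `p`. For the first, the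
reflection `k ↦ 2 p - k` turns `h'(2,1)` into `h(1,2)` up to sign and first-order corrections, so
that `h(1,2) + h'(2,1) ≡ -2 p (h(2,2) + 2 h(1,3))` modulo `p ^ 2`.

It remains to see that sums of weight four vanish modulo `p`. For `(2,2)` and `(1,3)` this follows
from the stuffle product and the reflection `k ↦ p - k`. For `(1,2,1)` the stuffle product gives
`2 h(1,1,2) + h(1,2,1) ≡ 0`, and the shuffle product of `1` and `(1,2)`, obtained from the partial
fractions `1 / (i j) = 1 / (i + j) * (1 / i + 1 / j)`, gives `2 h(1,2,1) + 3 h(1,1,2) ≡ 0`.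
-/

open Finset

section MonomialQSym

variable {R : Type*} [CommSemiring R]

/-- The monomial quasisymmetric function `M_s` with exponents `s = (s₁,…,s_l)`, evaluated at the
values `w m, …, w (n - 1)`, that is, the sum of `(w k₁) ^ s₁ ⋯ (w k_l) ^ s_l` over
`m ≤ k₁ < ⋯ < k_l < n`. With `w k = 1 / k` these are multiple harmonic sums, over an arbitrary
interval of indices and with values in any ring. -/
def monomialQSym (w : ℕ → R) : List ℕ → ℕ → ℕ → R
  | [], _, _ => 1
  | a :: s, m, n => ∑ k ∈ Ico m n, w k ^ a * monomialQSym w s (k + 1) n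

variable {w : ℕ → R} {s : List ℕ} {a b c l m n : ℕ}

@[simp] lemma monomialQSym_nil : monomialQSym w [] m n = 1 := rfl

lemma monomialQSym_cons : monomialQSym w (a :: s) m n =
    ∑ k ∈ Ico m n, w k ^ a * monomialQSym w s (k + 1) n := rfl

lemma monomialQSym_singleton : monomialQSym w [a] m n = ∑ k ∈ Ico m n, w k ^ a := by
  simp [monomialQSym_cons]

lemma monomialQSym_cons_of_lt (h : m < n) : monomialQSym w (a :: s) m n =
    w m ^ a * monomialQSym w s (m + 1) n + monomialQSym w (a :: s) (m + 1) n :=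
  sum_eq_sum_Ico_succ_bot h _

lemma monomialQSym_congr {v : ℕ → R} (h : ∀ k ∈ Ico m n, v k = w k) :
    monomialQSym v s m n = monomialQSym w s m n := by
  induction s generalizing m with
  | nil => rfl
  | cons a s ih =>
    refine sum_congr rfl fun k hk ↦ ?_
    rw [h k hk, ih fun j hj ↦ h j (Ico_subset_Ico_left (by grind) hj)]

lemma map_monomialQSym {S : Type*} [CommSemiring S] (φ : R →+* S) :
    φ (monomialQSym w s m n) = monomialQSym (fun k ↦ φ (w k)) s m n := by
  induction s generalizing m with
  | nil => simp
  | cons a s ih => simp only [monomialQSym_cons, map_sum, map_mul, map_pow, ih]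

lemma monomialQSym_const_mul (x : R) :
    monomialQSym (fun k ↦ x * w k) s m n = x ^ s.sum * monomialQSym w s m n := by
  induction s generalizing m with
  | nil => simp
  | cons a s ih =>
    simp only [monomialQSym_cons, ih, mul_sum, List.sum_cons]
    exact sum_congr rfl fun k _ ↦ by ring

lemma monomialQSym_add_right :
    monomialQSym (fun k ↦ w (k + l)) s m n = monomialQSym w s (m + l) (n + l) := by
  induction s generalizing m with
  | nil => rfl
  | cons a s ih =>
    rw [monomialQSym_cons, monomialQSym_cons, ← sum_Ico_add']
    exact sum_congr rfl fun k _ ↦ by rw [ih, Nat.add_right_comm]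

lemma monomialQSym_concat : monomialQSym w (s ++ [a]) m n =
    ∑ k ∈ Ico m n, monomialQSym w s m k * w k ^ a := by
  induction s generalizing m with
  | nil => simp [monomialQSym_singleton]
  | cons b s ih =>
    simp only [List.cons_append, monomialQSym_cons, ih, mul_sum, sum_mul]
    rw [sum_Ico_Ico_comm']
    simp only [mul_assoc]

lemma monomialQSym_reflect (h : n ≤ l + 1) : monomialQSym (fun k ↦ w (l - k)) s.reverse m n =
    monomialQSym w s (l + 1 - n) (l + 1 - m) := by
  induction s generalizing n with
  | nil => rfl
  | cons a s ih =>
    rw [List.reverse_cons, monomialQSym_concat, monomialQSym_cons, ← sum_Ico_reflect _ _ h]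
    refine sum_congr rfl fun k hk ↦ ?_
    have hkn : k < n := (mem_Ico.mp hk).2
    rw [ih (by lia), mul_comm, Nat.sub_add_comm (by lia)]

lemma monomialQSym_eq_sum_split (hlm : l ≤ m) (hmn : m ≤ n) : monomialQSym w s l n =
    ∑ i ∈ range (s.length + 1),
      monomialQSym w (s.take i) l m * monomialQSym w (s.drop i) m n := by
  induction s generalizing l with
  | nil => simp
  | cons a s ih =>
    rw [List.length_cons, sum_range_succ']
    simp only [List.take_succ_cons, List.drop_succ_cons, List.take_zero, List.drop_zero,
      monomialQSym_cons, monomialQSym_nil, one_mul, sum_mul]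
    rw [← sum_Ico_consecutive _ hlm hmn, sum_comm]
    congr 1
    refine sum_congr rfl fun k hk ↦ ?_
    rw [ih (by grind), mul_sum]
    simp only [mul_assoc]

lemma monomialQSym_one_two_one_split (hlm : l ≤ m) (hmn : m < n) :
    monomialQSym w [1, 2, 1] l n =
      monomialQSym w [1, 2, 1] l m + monomialQSym w [1, 2, 1] (m + 1) n +
        monomialQSym w [1, 2] l m * monomialQSym w [1] (m + 1) n +
        monomialQSym w [1] l m * monomialQSym w [2, 1] (m + 1) n +
        w m * (monomialQSym w [1, 2] l m + monomialQSym w [2, 1] (m + 1) n) +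
        w m ^ 2 * (monomialQSym w [1] l m * monomialQSym w [1] (m + 1) n) := by
  rw [monomialQSym_eq_sum_split hlm hmn.le]
  simp only [List.length_cons, List.length_nil, zero_add, Nat.reduceAdd, sum_range_succ, range_one,
    sum_singleton, List.take_zero, List.drop_zero, List.take_succ_cons, List.drop_succ_cons,
    List.take_nil, List.drop_nil, monomialQSym_nil, monomialQSym_cons_of_lt hmn, pow_one, one_mul,
    mul_one]
  ring

lemma sum_Ico_mul_sum_Ico {f g : ℕ → R} : (∑ k ∈ Ico m n, f k) * ∑ k ∈ Ico m n, g k =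
    (∑ k ∈ Ico m n, f k * ∑ j ∈ Ico (k + 1) n, g j) +
      (∑ k ∈ Ico m n, g k * ∑ j ∈ Ico (k + 1) n, f j) + ∑ k ∈ Ico m n, f k * g k := by
  rcases le_total n m with hnm | hmn
  · simp [Ico_eq_empty_of_le hnm]
  induction hmn using Nat.decreasingInduction with
  | self => simp
  | of_succ m hm ih =>
    simp only [sum_eq_sum_Ico_succ_bot hm, add_mul, mul_add, ih]
    ring

theorem monomialQSym_cons_mul_cons {t : List ℕ} :
    monomialQSym w (a :: s) m n * monomialQSym w (b :: t) m n =
      (∑ k ∈ Ico m n, w k ^ a * (monomialQSym w s (k + 1) n * monomialQSym w (b :: t) (k + 1) n)) +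
      (∑ k ∈ Ico m n, w k ^ b * (monomialQSym w t (k + 1) n * monomialQSym w (a :: s) (k + 1) n)) +
      ∑ k ∈ Ico m n, w k ^ (a + b) * (monomialQSym w s (k + 1) n * monomialQSym w t (k + 1) n) := by
  simp only [monomialQSym_cons (a := a), monomialQSym_cons (a := b), sum_Ico_mul_sum_Ico,
    mul_assoc]
  congr 1
  exact sum_congr rfl fun k _ ↦ by ring

lemma monomialQSym_singleton_mul_singleton :
    monomialQSym w [a] m n * monomialQSym w [b] m n =
      monomialQSym w [a, b] m n + monomialQSym w [b, a] m n + monomialQSym w [a + b] m n := by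
  rw [monomialQSym_cons_mul_cons]
  simp only [monomialQSym_nil, one_mul, mul_one, ← monomialQSym_cons, ← monomialQSym_singleton]

lemma monomialQSym_singleton_mul_pair :
    monomialQSym w [a] m n * monomialQSym w [b, c] m n =
      monomialQSym w [a, b, c] m n + monomialQSym w [b, a, c] m n + monomialQSym w [b, c, a] m n +
        monomialQSym w [b, a + c] m n + monomialQSym w [a + b, c] m n := by
  rw [monomialQSym_cons_mul_cons]
  simp only [monomialQSym_nil, one_mul, mul_comm (monomialQSym w [c] _ _),
    monomialQSym_singleton_mul_singleton, mul_add,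
    sum_add_distrib, ← monomialQSym_cons]
  ring

lemma monomialQSym_one_two_add_of_add_eq_mul {R : Type*} [CommRing R] {w v : ℕ → R} {t : R}
    (h : ∀ k ∈ Ico m n, w k + v k = t * (w k * v k)) :
    monomialQSym w [1, 2] m n + monomialQSym v [1, 2] m n =
      t * ∑ j ∈ Ico m n, ∑ k ∈ Ico (j + 1) n,
        (w j * v j * v k ^ 2 + w j * (w k * v k) * (w k - v k)) := by
  simp only [monomialQSym_cons, monomialQSym_nil, mul_sum, pow_one, mul_one, ← sum_add_distrib]
  refine sum_congr rfl fun j hj ↦ sum_congr rfl fun k hk ↦ ?_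
  linear_combination v k ^ 2 * h j hj + w j * (w k - v k) * h k (by grind)

lemma strictMono_finCons_iff {k : ℕ} {α : Type*} [Preorder α] {x : α} {f : Fin k → α} :
    StrictMono (Fin.cons x f : Fin (k + 1) → α) ↔ (∀ i, x < f i) ∧ StrictMono f := by
  simp [StrictMono, Fin.forall_fin_succ]

open Classical in
theorem sum_strictMono_prod_eq_monomialQSym :
    ∑ k ∈ univ.filter (fun k : Fin s.length → Fin n ↦ StrictMono k ∧ ∀ i, m ≤ (k i : ℕ)),
      ∏ i, w (k i) ^ s.get i = monomialQSym w s m n := by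
  induction s generalizing m with
  | nil => simp [StrictMono]
  | cons a s ih =>
    have hcons (x : Fin n) (k : Fin s.length → Fin n) :
        (StrictMono (Fin.cons x k : Fin (s.length + 1) → Fin n) ∧
          ∀ i, m ≤ ((Fin.cons x k : Fin (s.length + 1) → Fin n) i : ℕ)) ↔
        m ≤ (x : ℕ) ∧ (StrictMono k ∧ ∀ i, (x : ℕ) + 1 ≤ (k i : ℕ)) := by
      rw [strictMono_finCons_iff, Fin.forall_fin_succ]
      simp only [Fin.cons_zero, Fin.cons_succ, Fin.lt_def, Nat.succ_le_iff]
      grind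
    calc ∑ k ∈ univ.filter (fun k : Fin (s.length + 1) → Fin n ↦
            StrictMono k ∧ ∀ i, m ≤ (k i : ℕ)), ∏ i, w (k i) ^ (a :: s).get i
        = ∑ x : Fin n, ∑ k : Fin s.length → Fin n,
            if m ≤ (x : ℕ) ∧ (StrictMono k ∧ ∀ i, (x : ℕ) + 1 ≤ (k i : ℕ)) then
              w x ^ a * ∏ i, w (k i) ^ s.get i else 0 := by
          rw [sum_filter, ← (Fin.consEquiv fun _ ↦ Fin n).sum_comp, Fintype.sum_prod_type]
          exact Fintype.sum_congr _ _ fun x ↦ Fintype.sum_congr _ _ fun k ↦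
            if_congr (hcons x k) (Fin.prod_univ_succ _) rfl
      _ = ∑ x : Fin n, if m ≤ (x : ℕ) then w x ^ a * monomialQSym w s (x + 1) n else 0 := by
          simp only [ite_and, sum_ite_irrel, sum_const_zero, ← ih, sum_filter, mul_sum, mul_ite,
            mul_zero]
      _ = monomialQSym w (a :: s) m n := by
          rw [Fin.sum_univ_eq_sum_range
            (fun x ↦ if m ≤ x then w x ^ a * monomialQSym w s (x + 1) n else 0), ← sum_filter,
            monomialQSym_cons]
          congr 1
          grind

lemma mhs_eq_monomialQSym :
    mhs s n = monomialQSym (fun k ↦ (k : ℚ)⁻¹) s 1 (n + 1) := by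
  simp only [mhs, ← sum_strictMono_prod_eq_monomialQSym, one_div, inv_pow]

end MonomialQSym

section Convolution

variable {R : Type*} [CommSemiring R] {w f : ℕ → R} {n N : ℕ}

/-- The discrete convolution of two sequences: the `n`-th coefficient of the product of the power
series `∑_{k ≥ 1} w k X^k` and `∑_{k ≥ 1} f k X^k`. -/
def discreteConv (w f : ℕ → R) (n : ℕ) : R := ∑ j ∈ Ico 1 n, w (n - j) * f j

/-- The partial fraction identity `1 / (ij) = 1 / (i + j) * (1 / i + 1 / j)` in the indices
`i + j < N`, for a sequence `w` standing for `k ↦ 1 / k`. The bound `N` is there for rings in which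
`N` is not invertible. -/
def PartialFractionsBelow (w : ℕ → R) (N : ℕ) : Prop :=
  ∀ ⦃i j : ℕ⦄, 0 < i → 0 < j → i + j < N → w i * w j = w (i + j) * (w i + w j)

-- Taking partial sums is multiplication by `X / (1 - X)`, which commutes with convolution.
lemma discreteConv_sum_Ico :
    discreteConv w (fun k ↦ ∑ i ∈ Ico 1 k, f i) n = ∑ k ∈ Ico 1 n, discreteConv w f k := by
  simp only [discreteConv, mul_sum]
  rw [← sum_Ico_Ico_comm', ← sum_Ico_Ico_comm']
  refine sum_congr rfl fun i hi ↦ ?_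
  have hin : i < n := (mem_Ico.mp hi).2
  have hleft : ∑ j ∈ Ico (i + 1) n, w (n - j) = ∑ k ∈ Ico 1 (n - i), w k := by
    rw [sum_Ico_reflect _ _ (by lia), Nat.add_sub_cancel_left, Nat.add_sub_add_right]
  have hright : ∑ k ∈ Ico (i + 1) n, w (k - i) = ∑ k ∈ Ico 1 (n - i), w k := by
    rw [← sum_Ico_add_right_sub_eq 1 (n - i) i, Nat.sub_add_cancel hin.le, Nat.add_comm]
  rw [← sum_mul, ← sum_mul, hleft, hright]

lemma discreteConv_mul (hw : PartialFractionsBelow w N) (hn : n < N) :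
    discreteConv w (fun k ↦ w k * f k) n =
      w n * (discreteConv w f n + ∑ k ∈ Ico 1 n, w k * f k) := by
  rw [discreteConv, discreteConv, ← sum_add_distrib, mul_sum]
  refine sum_congr rfl fun k hk ↦ ?_
  obtain ⟨hk0, hkn⟩ := mem_Ico.mp hk
  have hpf := hw (Nat.sub_pos_of_lt hkn) hk0 (by lia)
  rw [Nat.sub_add_cancel hkn.le] at hpf
  rw [← mul_assoc, hpf]
  ring

lemma discreteConv_self (hw : PartialFractionsBelow w N) (hn : n < N) :
    discreteConv w w n = 2 * (w n * monomialQSym w [1] 1 n) := by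
  have h := discreteConv_mul (f := fun _ ↦ 1) hw hn
  have hone : discreteConv w (fun _ ↦ 1) n = ∑ k ∈ Ico 1 n, w k := by
    simp only [discreteConv, mul_one]
    rw [sum_Ico_reflect _ _ (by lia)]
    simp
  simp only [mul_one, hone] at h
  rw [h, monomialQSym_singleton]
  simp only [pow_one]
  ring

lemma discreteConv_monomialQSym_one (hw : PartialFractionsBelow w N) (hn : n ≤ N) :
    discreteConv w (monomialQSym w [1] 1) n = 2 * monomialQSym w [1, 1] 1 n := by
  have h1 : monomialQSym w [1] 1 = fun n ↦ ∑ k ∈ Ico 1 n, w k := by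
    funext n
    simp [monomialQSym_singleton]
  have h11 := monomialQSym_concat (w := w) (s := [1]) (a := 1) (m := 1) (n := n)
  rw [List.singleton_append] at h11
  rw [h1, discreteConv_sum_Ico, h11, mul_sum]
  refine sum_congr rfl fun k hk ↦ ?_
  have hkn : k < n := (mem_Ico.mp hk).2
  rw [discreteConv_self hw (by lia), pow_one, mul_comm (w k)]

theorem discreteConv_monomialQSym_one_two (hw : PartialFractionsBelow w N) :
    discreteConv w (monomialQSym w [1, 2] 1) N =
      monomialQSym w [1, 2, 1] 1 N + 3 * monomialQSym w [1, 1, 2] 1 N := by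
  have h12 : monomialQSym w [1, 2] 1 =
      fun n ↦ ∑ k ∈ Ico 1 n, w k * (w k * monomialQSym w [1] 1 k) := by
    funext n
    refine (monomialQSym_concat (s := [1])).trans (sum_congr rfl fun k _ ↦ ?_)
    ring
  have h11 (n : ℕ) : ∑ k ∈ Ico 1 n, w k * monomialQSym w [1] 1 k = monomialQSym w [1, 1] 1 n := by
    refine .symm ((monomialQSym_concat (s := [1])).trans (sum_congr rfl fun k _ ↦ ?_))
    ring
  have hinner {k : ℕ} (hk : k < N) :
      discreteConv w (fun k ↦ w k * (w k * monomialQSym w [1] 1 k)) k =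
        monomialQSym w [1, 2] 1 k * w k + 3 * (monomialQSym w [1, 1] 1 k * w k ^ 2) := by
    rw [discreteConv_mul hw hk, discreteConv_mul hw hk, discreteConv_monomialQSym_one hw hk.le, h11,
      h12]
    ring
  have h121 := monomialQSym_concat (w := w) (s := [1, 2]) (a := 1) (m := 1) (n := N)
  have h112 := monomialQSym_concat (w := w) (s := [1, 1]) (a := 2) (m := 1) (n := N)
  simp only [List.cons_append, List.nil_append, pow_one] at h121 h112
  rw [h121, h112, mul_sum, ← sum_add_distrib, h12, discreteConv_sum_Ico, ← h12]
  exact sum_congr rfl fun k hk ↦ hinner (mem_Ico.mp hk).2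

end Convolution

section FiniteMZV

/-- The multiple harmonic sum `H(s; p - 1)` modulo the prime `p`: the `p`-component of the finite
multiple zeta value `ζ_𝒜(s)`. -/
def finiteMZV (p : ℕ) (s : List ℕ) : ZMod p := monomialQSym (fun k ↦ (k : ZMod p)⁻¹) s 1 p

variable {p : ℕ} {s : List ℕ} {a b : ℕ}

lemma natCast_zmod_ne_zero {k : ℕ} (hk0 : 0 < k) (hkp : k < p) : (k : ZMod p) ≠ 0 := by
  rw [Ne, ZMod.natCast_eq_zero_iff]
  exact Nat.not_dvd_of_pos_of_lt hk0 hkp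

lemma sum_range_natCast_zmod [NeZero p] {M : Type*} [AddCommMonoid M] (f : ZMod p → M) :
    ∑ k ∈ range p, f k = ∑ x, f x := by
  refine sum_bij' (fun k _ ↦ (k : ZMod p)) (fun x _ ↦ x.val) (by simp)
    (fun x _ ↦ mem_range.mpr x.val_lt) ?_ (by simp) (by simp)
  exact fun k hk ↦ ZMod.val_cast_of_lt (mem_range.mp hk)

variable [Fact p.Prime]

lemma natCast_zmod_sub_inv {k n : ℕ} (hn : p ∣ n) (hkn : k ≤ n) :
    ((n - k : ℕ) : ZMod p)⁻¹ = -(k : ZMod p)⁻¹ := by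
  rw [Nat.cast_sub hkn, (ZMod.natCast_eq_zero_iff n p).mpr hn, zero_sub, inv_neg]

lemma partialFractionsBelow_zmod_inv : PartialFractionsBelow (fun k ↦ (k : ZMod p)⁻¹) p := by
  intro i j hi hj hij
  have hi0 := natCast_zmod_ne_zero hi (by lia : i < p)
  have hj0 := natCast_zmod_ne_zero hj (by lia : j < p)
  have hij0 := natCast_zmod_ne_zero (by lia) hij
  push_cast at hij0 ⊢
  field_simp
  ring

theorem finiteMZV_singleton (ha : a ≠ 0) (hap : a < p - 1) : finiteMZV p [a] = 0 := by
  have hp : 0 < p := (Fact.out : p.Prime).pos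
  calc finiteMZV p [a] = ∑ k ∈ range p, ((k : ZMod p)⁻¹) ^ a := by
        rw [range_eq_Ico, sum_eq_sum_Ico_succ_bot hp, finiteMZV, monomialQSym_singleton]
        simp [ha]
    _ = ∑ x : ZMod p, x ^ a := by
        rw [sum_range_natCast_zmod (fun x ↦ x⁻¹ ^ a)]
        exact Equiv.sum_comp (Equiv.inv (ZMod p)) (· ^ a)
    _ = 0 := FiniteField.sum_pow_lt_card_sub_one (ZMod p) a (by rwa [ZMod.card])

lemma finiteMZV_reverse : finiteMZV p s.reverse = (-1) ^ s.sum * finiteMZV p s := by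
  have hreflect := monomialQSym_reflect (w := fun k ↦ (k : ZMod p)⁻¹) (s := s.reverse) (m := 1)
    (Nat.le_succ p)
  rw [List.reverse_reverse, Nat.add_sub_cancel_left, Nat.add_sub_cancel] at hreflect
  rw [finiteMZV, finiteMZV, ← hreflect, ← monomialQSym_const_mul]
  refine monomialQSym_congr fun k hk ↦ ?_
  rw [natCast_zmod_sub_inv dvd_rfl (mem_Ico.mp hk).2.le, neg_one_mul]

theorem finiteMZV_pair (ha : a ≠ 0) (hab : a + b < p - 1) (heven : Even (a + b)) :
    finiteMZV p [a, b] = 0 := by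
  have hrev : finiteMZV p [b, a] = finiteMZV p [a, b] := by
    simpa [heven.neg_one_pow] using finiteMZV_reverse (p := p) (s := [a, b])
  have hstuffle : finiteMZV p [a] * finiteMZV p [b] =
      finiteMZV p [a, b] + finiteMZV p [b, a] + finiteMZV p [a + b] :=
    monomialQSym_singleton_mul_singleton
  rw [hrev, finiteMZV_singleton ha (by lia), finiteMZV_singleton (by lia) hab] at hstuffle
  have htwo : (2 : ZMod p) ≠ 0 := by exact_mod_cast natCast_zmod_ne_zero two_pos (by lia : 2 < p)
  refine (mul_eq_zero.mp ?_).resolve_left htwo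
  linear_combination -hstuffle

theorem finiteMZV_one_two_one (hp : 7 ≤ p) : finiteMZV p [1, 2, 1] = 0 := by
  have hstuffle : 2 * finiteMZV p [1, 1, 2] + finiteMZV p [1, 2, 1] = 0 := by
    have h : finiteMZV p [1] * finiteMZV p [1, 2] =
        finiteMZV p [1, 1, 2] + finiteMZV p [1, 1, 2] + finiteMZV p [1, 2, 1] +
          finiteMZV p [1, 3] + finiteMZV p [2, 2] := monomialQSym_singleton_mul_pair
    rw [finiteMZV_singleton one_ne_zero (by lia),
      finiteMZV_pair (b := 3) one_ne_zero (by lia) (by decide),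
      finiteMZV_pair (b := 2) two_ne_zero (by lia) (by decide)] at h
    linear_combination -h
  have hshuffle : 2 * finiteMZV p [1, 2, 1] + 3 * finiteMZV p [1, 1, 2] = 0 := by
    have hconv : discreteConv (fun k ↦ (k : ZMod p)⁻¹)
        (monomialQSym (fun k ↦ (k : ZMod p)⁻¹) [1, 2] 1) p = -finiteMZV p [1, 2, 1] := by
      refine .trans ?_ (congrArg Neg.neg (monomialQSym_concat (s := [1, 2])).symm)
      rw [discreteConv, ← sum_neg_distrib]
      refine sum_congr rfl fun k hk ↦ ?_
      rw [natCast_zmod_sub_inv dvd_rfl (mem_Ico.mp hk).2.le]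
      ring
    have h : -finiteMZV p [1, 2, 1] = finiteMZV p [1, 2, 1] + 3 * finiteMZV p [1, 1, 2] :=
      hconv.symm.trans (discreteConv_monomialQSym_one_two partialFractionsBelow_zmod_inv)
    linear_combination -h
  linear_combination 2 * hshuffle - 3 * hstuffle

end FiniteMZV

section PadicInt

variable {p : ℕ} {s : List ℕ} {k m n : ℕ}

lemma not_dvd_of_mem_Ico_one (hk : k ∈ Ico 1 p) : ¬p ∣ k :=
  Nat.not_dvd_of_pos_of_lt (mem_Ico.mp hk).1 (mem_Ico.mp hk).2

lemma not_dvd_of_mem_Ico_succ_two_mul (hk : k ∈ Ico (p + 1) (2 * p)) : ¬p ∣ k := by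
  obtain ⟨hpk, hk2p⟩ := mem_Ico.mp hk
  exact Nat.not_dvd_of_lt_of_lt_mul_succ (k := 1) (by lia) (by lia)

variable [Fact p.Prime]

lemma padicInt_natCast_mul_inv (hk : ¬p ∣ k) : (k : ℤ_[p]) * (k : ℤ_[p]).inv = 1 :=
  PadicInt.mul_inv <| PadicInt.norm_natCast_eq_one_iff.mpr <|
    ((Fact.out : p.Prime).coprime_iff_not_dvd).mpr hk

lemma map_padicInt_natCast_inv {K : Type*} [Field K] (φ : ℤ_[p] →+* K) (hk : ¬p ∣ k) :
    φ (k : ℤ_[p]).inv = (k : K)⁻¹ := by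
  refine eq_inv_of_mul_eq_one_right ?_
  rw [← map_natCast φ, ← map_mul, padicInt_natCast_mul_inv hk, map_one]

lemma padicInt_natCast_inv_add_inv {j k : ℕ} (hj : ¬p ∣ j) (hk : ¬p ∣ k) :
    (j : ℤ_[p]).inv + (k : ℤ_[p]).inv =
      (j + k : ℕ) * ((j : ℤ_[p]).inv * (k : ℤ_[p]).inv) := by
  push_cast
  linear_combination -(k : ℤ_[p]).inv * padicInt_natCast_mul_inv hj -
    (j : ℤ_[p]).inv * padicInt_natCast_mul_inv hk

lemma toZMod_eq_zero_iff_dvd {x : ℤ_[p]} : PadicInt.toZMod x = 0 ↔ (p : ℤ_[p]) ∣ x := by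
  rw [← RingHom.mem_ker, PadicInt.ker_toZMod, PadicInt.maximalIdeal_eq_span_p,
    Ideal.mem_span_singleton]

variable (p) in
/-- The sum of `k₁ ^ (-s₁) ⋯ k_l ^ (-s_l)` over `m ≤ k₁ < ⋯ < k_l < n` as a `p`-adic integer, for
intervals `[m, n)` without multiples of `p`; multiples of `p` have the junk inverse `0`. -/
noncomputable def padicMHS (s : List ℕ) (m n : ℕ) : ℤ_[p] :=
  monomialQSym (fun k ↦ (k : ℤ_[p]).inv) s m n

lemma map_padicMHS {K : Type*} [Field K] (φ : ℤ_[p] →+* K) (h : ∀ k ∈ Ico m n, ¬p ∣ k) :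
    φ (padicMHS p s m n) = monomialQSym (fun k ↦ (k : K)⁻¹) s m n := by
  rw [padicMHS, map_monomialQSym]
  exact monomialQSym_congr fun k hk ↦ map_padicInt_natCast_inv φ (h k hk)

lemma toZMod_padicMHS_one : PadicInt.toZMod (padicMHS p s 1 p) = finiteMZV p s :=
  map_padicMHS _ fun _ ↦ not_dvd_of_mem_Ico_one

lemma toZMod_padicMHS_succ_two_mul :
    PadicInt.toZMod (padicMHS p s (p + 1) (2 * p)) = finiteMZV p s := by
  rw [map_padicMHS _ fun _ ↦ not_dvd_of_mem_Ico_succ_two_mul, finiteMZV, Nat.add_comm, two_mul,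
    ← monomialQSym_add_right]
  exact monomialQSym_congr fun k _ ↦ by simp

theorem sq_dvd_padicMHS_one (hp : 5 ≤ p) : (p : ℤ_[p]) ^ 2 ∣ padicMHS p [1] 1 p := by
  have hp2 : ¬p ∣ 2 := Nat.not_dvd_of_pos_of_lt two_pos (by lia)
  let x : ℤ_[p] := ∑ k ∈ Ico 1 p, (k : ℤ_[p]).inv * ((p - k : ℕ) : ℤ_[p]).inv
  have htwo : 2 * padicMHS p [1] 1 p = p * x := by
    have hreflect : padicMHS p [1] 1 p = ∑ k ∈ Ico 1 p, ((p - k : ℕ) : ℤ_[p]).inv := by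
      rw [sum_Ico_reflect (fun k ↦ (k : ℤ_[p]).inv) 1 (Nat.le_succ p), padicMHS,
        monomialQSym_singleton]
      simp
    rw [two_mul]
    nth_rw 2 [hreflect]
    rw [padicMHS, monomialQSym_singleton, ← sum_add_distrib, mul_sum]
    refine sum_congr rfl fun k hk ↦ ?_
    rw [pow_one, padicInt_natCast_inv_add_inv (not_dvd_of_mem_Ico_one hk)
      (not_dvd_of_mem_Ico_one (by grind)), Nat.add_sub_cancel' (mem_Ico.mp hk).2.le]
  have hx : PadicInt.toZMod x = -finiteMZV p [2] := by
    rw [map_sum, finiteMZV, monomialQSym_singleton, ← sum_neg_distrib]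
    refine sum_congr rfl fun k hk ↦ ?_
    rw [map_mul, map_padicInt_natCast_inv _ (not_dvd_of_mem_Ico_one hk),
      map_padicInt_natCast_inv _ (not_dvd_of_mem_Ico_one (by grind)),
      natCast_zmod_sub_inv dvd_rfl (mem_Ico.mp hk).2.le]
    ring
  rw [finiteMZV_singleton two_ne_zero (by lia), neg_zero, toZMod_eq_zero_iff_dvd] at hx
  have hunit : IsUnit (2 : ℤ_[p]) := .of_mul_eq_one _ (mod_cast padicInt_natCast_mul_inv hp2)
  rw [← hunit.dvd_mul_left, htwo, sq]
  exact mul_dvd_mul_left _ hx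

theorem sq_dvd_padicMHS_one_two_add (hp : 7 ≤ p) :
    (p : ℤ_[p]) ^ 2 ∣ padicMHS p [1, 2] 1 p + padicMHS p [2, 1] (p + 1) (2 * p) := by
  let u (k : ℕ) : ℤ_[p] := (k : ℤ_[p]).inv
  let v (k : ℕ) : ℤ_[p] := u (2 * p - k)
  let x : ℤ_[p] := ∑ j ∈ Ico 1 p, ∑ k ∈ Ico (j + 1) p,
    (u j * v j * v k ^ 2 + u j * (u k * v k) * (u k - v k))
  have hv {k : ℕ} (hk : k ∈ Ico 1 p) : ¬p ∣ 2 * p - k :=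
    not_dvd_of_mem_Ico_succ_two_mul (by grind)
  have hreflect : padicMHS p [2, 1] (p + 1) (2 * p) = monomialQSym v [1, 2] 1 p := by
    have h := monomialQSym_reflect (w := u) (s := [2, 1]) (m := 1) (n := p) (l := 2 * p) (by lia)
    rw [Nat.add_sub_cancel, show 2 * p + 1 - p = p + 1 by lia] at h
    exact h.symm
  have hsum : padicMHS p [1, 2] 1 p + padicMHS p [2, 1] (p + 1) (2 * p) = (2 * p : ℕ) * x := by
    rw [hreflect]
    refine monomialQSym_one_two_add_of_add_eq_mul fun k hk ↦ ?_
    have hk2p : k ≤ 2 * p := by grind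
    rw [padicInt_natCast_inv_add_inv (not_dvd_of_mem_Ico_one hk) (hv hk), Nat.add_sub_cancel' hk2p]
  have hx : PadicInt.toZMod x = -(finiteMZV p [2, 2] + 2 * finiteMZV p [1, 3]) := by
    have hu_mod {k : ℕ} (hk : k ∈ Ico 1 p) : PadicInt.toZMod (u k) = (k : ZMod p)⁻¹ :=
      map_padicInt_natCast_inv _ (not_dvd_of_mem_Ico_one hk)
    have hv_mod {k : ℕ} (hk : k ∈ Ico 1 p) : PadicInt.toZMod (v k) = -(k : ZMod p)⁻¹ := by
      rw [map_padicInt_natCast_inv _ (hv hk), natCast_zmod_sub_inv (Dvd.intro_left 2 rfl)]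
      grind
    simp only [x, finiteMZV, monomialQSym_cons, monomialQSym_nil, mul_one, map_sum, mul_sum,
      ← sum_add_distrib, ← sum_neg_distrib]
    refine sum_congr rfl fun j hj ↦ sum_congr rfl fun k hk ↦ ?_
    have hk1 : k ∈ Ico 1 p := by grind
    simp only [map_add, map_sub, map_mul, map_pow, hu_mod hj, hv_mod hj, hu_mod hk1, hv_mod hk1]
    ring
  rw [finiteMZV_pair (b := 2) two_ne_zero (by lia) (by decide),
    finiteMZV_pair (b := 3) one_ne_zero (by lia) (by decide), mul_zero, add_zero, neg_zero,
    toZMod_eq_zero_iff_dvd] at hx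
  rw [hsum, sq, Nat.cast_mul, mul_assoc]
  exact (mul_dvd_mul_left _ hx).mul_left _

theorem exists_coe_mhs_one_two_one_eq_mul (hp : 7 ≤ p) :
    ∃ x : ℤ_[p], ((mhs [1, 2, 1] (2 * p - 1) : ℚ) : ℚ_[p]) = p * x := by
  have hp0 : (p : ℚ_[p]) ≠ 0 := by exact_mod_cast (Fact.out : p.Prime).ne_zero
  have hleft (s : List ℕ) :
      monomialQSym (fun k ↦ (k : ℚ_[p])⁻¹) s 1 p = (padicMHS p s 1 p : ℚ_[p]) :=
    (map_padicMHS PadicInt.Coe.ringHom fun _ ↦ not_dvd_of_mem_Ico_one).symm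
  have hright (s : List ℕ) : monomialQSym (fun k ↦ (k : ℚ_[p])⁻¹) s (p + 1) (2 * p) =
      (padicMHS p s (p + 1) (2 * p) : ℚ_[p]) :=
    (map_padicMHS PadicInt.Coe.ringHom fun _ ↦ not_dvd_of_mem_Ico_succ_two_mul).symm
  have hcast : ((mhs [1, 2, 1] (2 * p - 1) : ℚ) : ℚ_[p]) =
      monomialQSym (fun k ↦ (k : ℚ_[p])⁻¹) [1, 2, 1] 1 (2 * p) := by
    rw [mhs_eq_monomialQSym, ← Rat.coe_castHom, map_monomialQSym, Nat.sub_add_cancel (by lia)]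
    simp
  have dvd_left {s : List ℕ} (hs : finiteMZV p s = 0) : (p : ℤ_[p]) ∣ padicMHS p s 1 p :=
    toZMod_eq_zero_iff_dvd.mp (toZMod_padicMHS_one.trans hs)
  have dvd_right {s : List ℕ} (hs : finiteMZV p s = 0) :
      (p : ℤ_[p]) ∣ padicMHS p s (p + 1) (2 * p) :=
    toZMod_eq_zero_iff_dvd.mp (toZMod_padicMHS_succ_two_mul.trans hs)
  obtain ⟨a, ha⟩ := dvd_left (finiteMZV_one_two_one hp)
  obtain ⟨b, hb⟩ := dvd_right (finiteMZV_one_two_one hp)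
  obtain ⟨c, hc⟩ := dvd_right (finiteMZV_singleton one_ne_zero (by lia : 1 < p - 1))
  obtain ⟨d, hd⟩ := sq_dvd_padicMHS_one (by lia : 5 ≤ p)
  obtain ⟨e, he⟩ := sq_dvd_padicMHS_one_two_add hp
  refine ⟨a + b + padicMHS p [1, 2] 1 p * c + p * d * padicMHS p [2, 1] (p + 1) (2 * p) + e +
    d * c, ?_⟩
  rw [hcast, monomialQSym_one_two_one_split (m := p) (by lia) (by lia)]
  simp only [hleft, hright]
  rw [← PadicInt.coe_add (padicMHS p [1, 2] 1 p), he, ha, hb, hc, hd]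
  push_cast
  field_simp

lemma dvd_num_of_coe_eq_mul {q : ℚ} {x : ℤ_[p]} (h : (q : ℚ_[p]) = p * x) : (p : ℤ) ∣ q.num := by
  have hnum : (q.num : ℤ_[p]) = p * (x * q.den) := by
    refine PadicInt.ext ?_
    push_cast
    rw [← mul_assoc, ← h]
    exact_mod_cast (Rat.mul_den_eq_num q).symm
  rw [← PadicInt.norm_int_lt_one_iff_dvd, PadicInt.norm_lt_one_iff_dvd, hnum]
  exact dvd_mul_right _ _

end PadicInt

/-- For every prime `p ≥ 7`, `p` divides the numerator of `H(1,2,1; 2p-1)`. -/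
theorem stmt5 (p : ℕ) (hp : p.Prime) (hp7 : 7 ≤ p) :
    (p : ℤ) ∣ (mhs [1, 2, 1] (2 * p - 1)).num := by
  have : Fact p.Prime := ⟨hp⟩
  obtain ⟨x, hx⟩ := exists_coe_mhs_one_two_one_eq_mul hp7
  exact dvd_num_of_coe_eq_mul hx
end

section
/- Let p be an odd prime, s a positive integer, and r an integer with 1 ≤ r ≤ p-2. Then p divides the numerator of H(s;r) if and only if p divides the numerator of H(s;p-1-r); that is, v_p(H(s;r)) ≥ 1 if and only if v_p(H(s;p-1-r)) ≥ 1. -/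
/-!
Work modulo `p`. If `p - 1 ∤ s`, the power sum of exponent `-s` over all nonzero residues vanishes,
and the substitution `k ↦ p - k` in its last `p - 1 - r` terms gives
`H(s; r) + (-1) ^ s * H(s; p - 1 - r) ≡ 0`. If `p - 1 ∣ s`, every term is `1` by Fermat, so
`H(s; n) ≡ n` is nonzero both for `n = r` and for `n = p - 1 - r`.
-/

theorem natCast_ne_zero_of_lt {R : Type*} [AddMonoidWithOne R] {p n : ℕ} [CharP R p]
    (hn0 : n ≠ 0) (hn : n < p) : (n : R) ≠ 0 := by
  rw [Ne, CharP.cast_eq_zero_iff R p]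
  exact Nat.not_dvd_of_pos_of_lt (Nat.pos_of_ne_zero hn0) hn

theorem sum_range_pred_natCast_succ {M : Type*} [AddCommMonoid M] (p : ℕ) [Fact p.Prime]
    (f : ZMod p → M) :
    ∑ k ∈ Finset.range (p - 1), f (k + 1 : ℕ) = ∑ u : (ZMod p)ˣ, f u := by
  have hval (u : (ZMod p)ˣ) : (u : ZMod p).val - 1 + 1 = (u : ZMod p).val :=
    Nat.sub_add_cancel (ZMod.val_pos.mpr u.ne_zero)
  symm
  refine Finset.sum_bij (fun u _ => (u : ZMod p).val - 1) ?_ ?_ ?_ ?_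
  · intro u _
    have := (u : ZMod p).val_lt
    have := hval u
    exact Finset.mem_range.mpr (by omega)
  · intro u _ v _ huv
    refine Units.ext (ZMod.val_injective p ?_)
    rw [← hval u, huv, hval v]
  · intro k hk
    have hkp : k + 1 < p := by have := Finset.mem_range.mp hk; omega
    have hne : ((k + 1 : ℕ) : ZMod p) ≠ 0 := natCast_ne_zero_of_lt k.succ_ne_zero hkp
    refine ⟨Units.mk0 _ hne, Finset.mem_univ _, ?_⟩
    rw [Units.val_mk0, ZMod.val_cast_of_lt hkp, Nat.add_sub_cancel]
  · intro u _
    rw [hval, ZMod.natCast_zmod_val]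

section RatCast

variable {ι K : Type*} [DivisionRing K]

theorem natCast_den_sum_ne_zero {t : Finset ι} {f : ι → ℚ}
    (hf : ∀ i ∈ t, ((f i).den : K) ≠ 0) : ((∑ i ∈ t, f i).den : K) ≠ 0 := by
  induction t using Finset.cons_induction with
  | empty => simp
  | cons a t ha ih =>
    have hmul : (((f a).den * (∑ i ∈ t, f i).den : ℕ) : K) ≠ 0 := by
      rw [Nat.cast_mul]
      exact mul_ne_zero (hf a (Finset.mem_cons_self a t))
        (ih fun i hi => hf i (Finset.mem_cons_of_mem hi))
    rw [Finset.sum_cons]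
    exact ne_zero_of_dvd_ne_zero hmul (Nat.cast_dvd_cast (Rat.add_den_dvd _ _))

theorem ratCast_sum_of_den_ne_zero {t : Finset ι} {f : ι → ℚ}
    (hf : ∀ i ∈ t, ((f i).den : K) ≠ 0) : ((∑ i ∈ t, f i : ℚ) : K) = ∑ i ∈ t, (f i : K) := by
  induction t using Finset.cons_induction with
  | empty => simp
  | cons a t ha ih =>
    have ht : ∀ i ∈ t, ((f i).den : K) ≠ 0 := fun i hi => hf i (Finset.mem_cons_of_mem hi)
    rw [Finset.sum_cons, Finset.sum_cons, ← ih ht,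
      Rat.cast_add_of_ne_zero (hf a (Finset.mem_cons_self a t)) (natCast_den_sum_ne_zero ht)]

theorem ratCast_eq_zero_iff_dvd_num (p : ℕ) [CharP K p] {q : ℚ} (hq : (q.den : K) ≠ 0) :
    (q : K) = 0 ↔ (p : ℤ) ∣ q.num := by
  rw [Rat.cast_def, div_eq_zero_iff, or_iff_left hq, CharP.intCast_eq_zero_iff K p]

end RatCast

/-- The depth-one harmonic sum `H(s; n) = ∑_{1 ≤ k ≤ n} k^{-s}`, with values in an arbitrary
division ring `K`, so that it can be reduced modulo `p`; the summation index is `k - 1`. Terms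
in which `k` vanishes in `K` take the junk value `0` when `0 < s` and `1` when `s = 0`. -/
def harmonicSum (K : Type*) [DivisionRing K] (s n : ℕ) : K :=
  ∑ k ∈ Finset.range n, (((k + 1 : ℕ) : K) ^ s)⁻¹

theorem mhs_singleton (s n : ℕ) : mhs [s] n = harmonicSum ℚ s n := by
  have hmono (k : Fin [s].length → Fin (n + 1)) : StrictMono k :=
    Subsingleton.strictMono (α := Fin 1) k
  calc mhs [s] n
      = ∑ k : Fin 1 → Fin (n + 1), if 1 ≤ (k 0 : ℕ) then (((k 0 : ℕ) : ℚ) ^ s)⁻¹ else 0 := by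
        simp [mhs, hmono, Finset.sum_filter]
    _ = ∑ j : Fin (n + 1), if 1 ≤ (j : ℕ) then ((j : ℚ) ^ s)⁻¹ else 0 :=
        Fintype.sum_equiv (Equiv.funUnique (Fin 1) (Fin (n + 1))) _ _ fun _ => rfl
    _ = harmonicSum ℚ s n := by
        simp [Fin.sum_univ_succ, harmonicSum, Finset.sum_range]

namespace harmonicSum

section DivisionRing

variable {K : Type*} [DivisionRing K]

theorem dvd_num_iff_eq_zero {p n : ℕ} [CharP K p] (s : ℕ) (hn : n < p) :
    (p : ℤ) ∣ (harmonicSum ℚ s n).num ↔ harmonicSum K s n = 0 := by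
  have hterm (k : ℕ) : (((k + 1 : ℕ) : ℚ) ^ s)⁻¹ = (((k + 1) ^ s : ℕ) : ℚ)⁻¹ := by
    rw [Nat.cast_pow]
  have hden : ∀ k ∈ Finset.range n, (((((k + 1 : ℕ) : ℚ) ^ s)⁻¹).den : K) ≠ 0 := by
    intro k hk
    have hkp : k + 1 < p := by have := Finset.mem_range.mp hk; omega
    rw [hterm, Rat.inv_natCast_den_of_pos (by positivity), Nat.cast_pow]
    exact pow_ne_zero s (natCast_ne_zero_of_lt k.succ_ne_zero hkp)
  have hcast : ((harmonicSum ℚ s n : ℚ) : K) = harmonicSum K s n := by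
    rw [harmonicSum, ratCast_sum_of_den_ne_zero hden]
    refine Finset.sum_congr rfl fun k _ => ?_
    rw [hterm, Rat.cast_inv_nat, Nat.cast_pow]
  rw [← hcast]
  exact (ratCast_eq_zero_iff_dvd_num p (natCast_den_sum_ne_zero hden)).symm

theorem add_of_cast_eq_zero (s : ℕ) {m n : ℕ} (h : ((m + n + 1 : ℕ) : K) = 0) :
    harmonicSum K s (m + n) = harmonicSum K s m + (-1) ^ s * harmonicSum K s n := by
  have hneg : ∀ j ∈ Finset.range n,
      (((m + (n - 1 - j) + 1 : ℕ) : K) ^ s)⁻¹ = (-1) ^ s * (((j + 1 : ℕ) : K) ^ s)⁻¹ := by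
    intro j hj
    have hsum : m + (n - 1 - j) + 1 + (j + 1) = m + n + 1 := by
      have := Finset.mem_range.mp hj
      omega
    have hcast : ((m + (n - 1 - j) + 1 : ℕ) : K) = -((j + 1 : ℕ) : K) := by
      rw [eq_neg_iff_add_eq_zero, ← Nat.cast_add, hsum, h]
    rw [hcast, ← inv_pow, ← inv_pow, inv_neg, neg_pow]
  rw [harmonicSum, Finset.sum_range_add,
    ← Finset.sum_range_reflect (fun j => (((m + j + 1 : ℕ) : K) ^ s)⁻¹),
    Finset.sum_congr rfl hneg, ← Finset.mul_sum, harmonicSum, harmonicSum]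

end DivisionRing

section ZMod

variable {p s : ℕ} [Fact p.Prime]

theorem zmod_pred : harmonicSum (ZMod p) s (p - 1) = if p - 1 ∣ s then -1 else 0 :=
  calc harmonicSum (ZMod p) s (p - 1)
      = ∑ u : (ZMod p)ˣ, ((u : ZMod p) ^ s)⁻¹ :=
        sum_range_pred_natCast_succ p fun x => (x ^ s)⁻¹
    _ = ∑ u : (ZMod p)ˣ, (u : ZMod p) ^ s :=
        Fintype.sum_equiv (Equiv.inv _) _ _ fun u => by
          rw [Equiv.inv_apply, Units.val_inv_eq_inv_val, inv_pow]
    _ = if p - 1 ∣ s then -1 else 0 := by rw [FiniteField.sum_pow_units, ZMod.card]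

theorem zmod_eq_zero_iff_of_not_dvd {m n : ℕ} (hs : ¬ p - 1 ∣ s) (hmn : m + n + 1 = p) :
    harmonicSum (ZMod p) s m = 0 ↔ harmonicSum (ZMod p) s n = 0 := by
  have hsum : harmonicSum (ZMod p) s m + (-1) ^ s * harmonicSum (ZMod p) s n = 0 := by
    rw [← add_of_cast_eq_zero s (by rw [hmn, ZMod.natCast_self]), show m + n = p - 1 by omega,
      zmod_pred, if_neg hs]
  have hsign : (-1 : ZMod p) ^ s ≠ 0 := pow_ne_zero s (neg_ne_zero.mpr one_ne_zero)
  rw [eq_neg_of_add_eq_zero_left hsum, neg_eq_zero, mul_eq_zero, or_iff_right hsign]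

theorem zmod_eq_natCast_of_dvd {n : ℕ} (hs : p - 1 ∣ s) (hn : n < p) :
    harmonicSum (ZMod p) s n = n := by
  have hone : ∀ k ∈ Finset.range n, (((k + 1 : ℕ) : ZMod p) ^ s)⁻¹ = 1 := by
    intro k hk
    have hkp : k + 1 < p := by have := Finset.mem_range.mp hk; omega
    obtain ⟨c, rfl⟩ := hs
    rw [pow_mul, ZMod.pow_card_sub_one_eq_one (natCast_ne_zero_of_lt k.succ_ne_zero hkp),
      one_pow, inv_one]
  rw [harmonicSum, Finset.sum_congr rfl hone, Finset.sum_const, Finset.card_range, nsmul_one]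

theorem zmod_ne_zero_of_dvd {n : ℕ} (hs : p - 1 ∣ s) (hn0 : n ≠ 0) (hn : n < p) :
    harmonicSum (ZMod p) s n ≠ 0 := by
  rw [zmod_eq_natCast_of_dvd hs hn]
  exact natCast_ne_zero_of_lt hn0 hn

end ZMod

end harmonicSum

/-- Symmetry of `J₁(s|p)` about `(p-1)/2`: for `1 ≤ r ≤ p-2`, `p` divides the
numerator of `H(s;r)` iff it divides the numerator of `H(s;p-1-r)`. -/
theorem stmt16 (p s r : ℕ) (hp : p.Prime) (hodd : Odd p) (hs : 0 < s)
    (hr1 : 1 ≤ r) (hr2 : r ≤ p - 2) :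
    (p : ℤ) ∣ (mhs [s] r).num ↔ (p : ℤ) ∣ (mhs [s] (p - 1 - r)).num := by
  have : Fact p.Prime := ⟨hp⟩
  rw [mhs_singleton, mhs_singleton, harmonicSum.dvd_num_iff_eq_zero (K := ZMod p) s (by omega),
    harmonicSum.dvd_num_iff_eq_zero (K := ZMod p) s (by omega)]
  by_cases hd : p - 1 ∣ s
  · exact iff_of_false (harmonicSum.zmod_ne_zero_of_dvd hd (by omega) (by omega))
      (harmonicSum.zmod_ne_zero_of_dvd hd (by omega) (by omega))
  · exact harmonicSum.zmod_eq_zero_iff_of_not_dvd hd (by omega)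
end

section
/- Let l ≥ 2 be an even integer and let p ≥ l+3 be a prime. Then the multiple harmonic sum H({1}^l; 2p-1) = Σ_{1 ≤ k₁ < ⋯ < k_l ≤ 2p-1} 1/(k₁⋯k_l) satisfies v_p( H({1}^l;2p-1) + 2p·B_{p-l-1} ) ≥ 2; that is, H({1}^l;2p-1) ≡ −2p·B_{p-l-1} (mod p²). In particular p divides the numerator of H({1}^l;2p-1). -/
/-! Let `P = (X + 1)⋯(X + 2p - 1)` and `G = (X + 1)⋯(X + p - 1)`, so that `H({1}^l; 2p - 1)` is the
quotient of the coefficients of `X ^ l` and `1` in `P`. Recentring at `-p` gives the odd polynomial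
`P(X - p) = X G(X) G(-X)`, so expanding back to second order in `p` leaves only a linear term:
`P_l ≡ p (l + 1) [X ^ l] G(X) G(-X)` modulo `p ^ 3` for even `l`. Since `G ≡ X ^ (p - 1) - 1` modulo
`p`, this is `2 p (l + 1) G_0 G_l` for `0 < l`, and `p G_0 ^ 2` for `l = 0`. Finally Newton's
identities and Faulhaber's formula give `(l + 1) G_l ≡ p B_{p - 1 - l}` modulo `p ^ 2`. -/

section PadicBall

variable {p : ℕ} [Fact p.Prime] {m n : ℤ} {x y : ℚ}

variable (p) in
/-- The fractional ideal `p ^ n ℤ₍ₚ₎` of `ℚ`, as an additive subgroup: the rationals of `p`-adic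
valuation at least `n`. Congruences `x ≡ y` modulo `p ^ n` between rational numbers are expressed
as `x - y ∈ padicBall p n`. -/
def padicBall (n : ℤ) : AddSubgroup ℚ :=
  (Rat.padicValuation p).leAddSubgroup (WithZero.exp (-n))

theorem mem_padicBall_iff : x ∈ padicBall p n ↔ x = 0 ∨ n ≤ padicValRat p x := by
  by_cases hx : x = 0 <;>
    simp [padicBall, Rat.padicValuation, hx, -WithZero.exp_neg, WithZero.exp_le_exp]

theorem padicBall_antitone : Antitone (padicBall p) := fun _ _ h ↦
  Valuation.leAddSubgroup_monotone _ (WithZero.exp_le_exp.2 (neg_le_neg h))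

theorem mul_mem_padicBall (hx : x ∈ padicBall p m) (hy : y ∈ padicBall p n) :
    x * y ∈ padicBall p (m + n) := by
  simpa only [padicBall, Valuation.mem_leAddSubgroup_iff, map_mul, neg_add, WithZero.exp_add]
    using mul_le_mul' hx hy

theorem mul_mem_padicBall_iff (hy : y ≠ 0) :
    x * y ∈ padicBall p (n + padicValRat p y) ↔ x ∈ padicBall p n := by
  by_cases hx : x = 0
  · simp [hx, zero_mem]
  · simp [mem_padicBall_iff, hx, hy, padicValRat.mul hx hy]

theorem intCast_mem_padicBall_iff {n : ℕ} {z : ℤ} :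
    (z : ℚ) ∈ padicBall p n ↔ (p : ℤ) ^ n ∣ z := by
  rw [mem_padicBall_iff, padicValInt_dvd_iff, padicValRat.of_int]
  norm_cast

theorem intCast_mem_padicBall_zero (z : ℤ) : (z : ℚ) ∈ padicBall p 0 :=
  intCast_mem_padicBall_iff (n := 0).2 (by simp)

theorem dvd_num_of_mem_padicBall {n : ℕ} (hx : x ∈ padicBall p n) : (p : ℤ) ^ n ∣ x.num := by
  rw [← intCast_mem_padicBall_iff, ← Rat.mul_den_eq_num]
  simpa using mul_mem_padicBall hx (intCast_mem_padicBall_zero x.den)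

theorem prime_mem_padicBall_one : (p : ℚ) ∈ padicBall p 1 :=
  mod_cast intCast_mem_padicBall_iff (n := 1) (z := p).2 (by simp)

end PadicBall

section Bernoulli

open Finset

variable {p : ℕ} [Fact p.Prime]

theorem inv_natCast_mem_padicBall_zero {n : ℕ} (hn : ¬ p ∣ n) :
    (n : ℚ)⁻¹ ∈ padicBall p 0 := by
  simp [mem_padicBall_iff, padicValRat.inv, padicValNat.eq_zero_of_not_dvd hn]

theorem bernoulli_mem_padicBall_zero {n : ℕ} (hn : ¬ (p - 1) ∣ n) :
    bernoulli n ∈ padicBall p 0 := by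
  rcases n.even_or_odd' with ⟨k, rfl | rfl⟩
  · obtain ⟨z, hz⟩ := Bernoulli.vonStaudt_clausen k
    rw [eq_sub_of_add_eq hz.symm]
    refine sub_mem (intCast_mem_padicBall_zero z) (sum_mem fun q hq ↦ ?_)
    rw [one_div]
    refine inv_natCast_mem_padicBall_zero fun hpq ↦ hn ?_
    obtain ⟨-, hqp, hqk⟩ := mem_filter.1 hq
    rwa [(Nat.prime_dvd_prime_iff_eq Fact.out hqp).1 hpq]
  · rcases k.eq_zero_or_pos with rfl | hk
    · have hp2 : ¬ p ∣ 2 := fun h ↦ hn <| by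
        simp [(Nat.prime_dvd_prime_iff_eq Fact.out Nat.prime_two).1 h]
      simpa [neg_div] using inv_natCast_mem_padicBall_zero hp2
    · rw [bernoulli_eq_zero_of_odd (odd_two_mul_add_one k) (by omega)]
      exact zero_mem _

theorem sum_range_pow_sub_mul_bernoulli_mem_padicBall {m : ℕ} (hm : m + 1 < p) :
    ∑ k ∈ range p, (k : ℚ) ^ m - p * bernoulli m ∈ padicBall p 2 := by
  have hm0 : (m : ℚ) + 1 ≠ 0 := by positivity
  have hinv : ((m + 1 : ℕ) : ℚ)⁻¹ ∈ padicBall p 0 :=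
    inv_natCast_mem_padicBall_zero (Nat.not_dvd_of_pos_of_lt m.succ_pos hm)
  have hlast : bernoulli m * (m + 1).choose m * (p : ℚ) ^ (m + 1 - m) / (m + 1) =
      p * bernoulli m := by
    rw [Nat.choose_succ_self_right, Nat.add_sub_cancel_left]
    push_cast
    field_simp
  rw [sum_range_pow, sum_range_succ, hlast, add_sub_cancel_right]
  refine sum_mem fun i hi ↦ ?_
  have him : i < m := mem_range.1 hi
  have hB : bernoulli i ∈ padicBall p 0 := by
    rcases i.eq_zero_or_pos with rfl | hi0
    · simpa using intCast_mem_padicBall_zero (p := p) 1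
    · exact bernoulli_mem_padicBall_zero (Nat.not_dvd_of_pos_of_lt hi0 (by omega))
  have hpow : (((m + 1).choose i * (p : ℤ) ^ (m + 1 - i) : ℤ) : ℚ) ∈ padicBall p (2 : ℕ) :=
    intCast_mem_padicBall_iff.2 ((pow_dvd_pow _ (by omega)).mul_left _)
  convert mul_mem_padicBall (mul_mem_padicBall hB hpow) hinv using 1
  · norm_num
  · push_cast
    ring

end Bernoulli

section EvenOdd

open Finset Polynomial

variable {R : Type*} [CommRing R]

theorem coeff_comp_neg_X (f : R[X]) (n : ℕ) :
    (f.comp (-X)).coeff n = (-1) ^ n * f.coeff n := by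
  have hX : (-X : R[X]) = C (-1) * X := by rw [C_neg, C_1, neg_one_mul]
  rw [hX, comp_C_mul_X_coeff, mul_comm]

theorem coeff_eq_zero_of_comp_neg_X_eq_neg [IsDomain R] [CharZero R] {f : R[X]}
    (hf : f.comp (-X) = -f) {n : ℕ} (hn : Even n) : f.coeff n = 0 := by
  have h := coeff_comp_neg_X f n
  rwa [hf, coeff_neg, hn.neg_one_pow, one_mul, neg_eq_self] at h

theorem cube_dvd_coeff_comp_X_add_C_sub [IsDomain R] [CharZero R] {f : R[X]}
    (hf : f.comp (-X) = -f) (c : R) {l : ℕ} (hl : Even l) :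
    c ^ 3 ∣ (f.comp (X + C c)).coeff l - c * ((l + 1) * f.coeff (l + 1)) := by
  -- The divided derivative `h` is odd, so its expansion at `0` has no constant or quadratic term.
  set h := hasseDeriv l f with hh
  have hX : X ^ 3 ∣ h - C (h.coeff 1) * X := by
    refine X_pow_dvd_iff.2 fun d hd ↦ ?_
    have hev (k : ℕ) (hk : Even k) : h.coeff k = 0 := by
      rw [hh, hasseDeriv_coeff, coeff_eq_zero_of_comp_neg_X_eq_neg hf (hk.add hl), mul_zero]
    interval_cases d <;> simp [hev, coeff_X]
  have hc := eval_dvd (x := c) hX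
  have h1 : h.coeff 1 = (l + 1) * f.coeff (l + 1) := by
    rw [hh, hasseDeriv_coeff, add_comm 1 l, Nat.choose_succ_self_right]
    push_cast
    rfl
  rw [← taylor_apply, taylor_coeff, ← hh, ← h1]
  simpa only [eval_sub, eval_mul, eval_pow, eval_C, eval_X, mul_comm c] using hc

theorem coeff_mul_comp_neg_X_sub_mem_sq {I : Ideal R} {f : R[X]} {l : ℕ} (hl : Even l)
    (hl0 : l ≠ 0) (hI : ∀ i, 0 < i → i < l → f.coeff i ∈ I) :
    (f * f.comp (-X)).coeff l - 2 * f.coeff 0 * f.coeff l ∈ I ^ 2 := by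
  have hmem : (0, l) ∈ HasAntidiagonal.antidiagonal l := by simp
  have hmem' : (l, 0) ∈ (HasAntidiagonal.antidiagonal l).erase (0, l) := by simp [hl0]
  rw [coeff_mul, ← add_sum_erase _ _ hmem, ← add_sum_erase _ _ hmem']
  simp only [coeff_comp_neg_X, hl.neg_one_pow, pow_zero, one_mul]
  rw [show ∀ a b s : R, a * b + (b * a + s) - 2 * a * b = s by intros; ring]
  refine sum_mem fun ⟨i, j⟩ hij ↦ ?_
  simp only [mem_erase, ne_eq, Prod.mk.injEq, HasAntidiagonal.mem_antidiagonal] at hij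
  rw [pow_two]
  exact Ideal.mul_mem_mul (hI i (by omega) (by omega))
    (I.mul_mem_left _ (hI j (by omega) (by omega)))

end EvenOdd

section Newton

open Finset MvPolynomial

variable {σ R : Type*} [Fintype σ] [CommRing R] {I : Ideal R} {f : σ → R} {k : ℕ}

theorem aeval_psum_mem (hk : 0 < k) (hI : ∀ i, 0 < i → i ≤ k → aeval f (esymm σ ℤ i) ∈ I) :
    aeval f (psum σ ℤ k) ∈ I := by
  rw [psum_eq_mul_esymm_sub_sum σ ℤ k hk, map_sub, map_sum]
  refine sub_mem ?_ (sum_mem fun a ha ↦ ?_)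
  · rw [map_mul]
    exact I.mul_mem_left _ (hI k hk le_rfl)
  · obtain ⟨-, ha0, hak⟩ := mem_filter.1 ha
    rw [map_mul, map_mul]
    exact I.mul_mem_right _ (I.mul_mem_left _ (hI a.1 ha0 hak.le))

theorem aeval_psum_sub_esymm_mem_sq (hk : 0 < k)
    (hI : ∀ i, 0 < i → i < k → aeval f (esymm σ ℤ i) ∈ I) :
    aeval f (psum σ ℤ k) - (-1) ^ (k + 1) * k * aeval f (esymm σ ℤ k) ∈ I ^ 2 := by
  rw [psum_eq_mul_esymm_sub_sum σ ℤ k hk, map_sub, map_sum]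
  simp only [map_mul, map_pow, map_neg, map_one, map_natCast, sub_sub_cancel_left]
  refine neg_mem (sum_mem fun a ha ↦ ?_)
  obtain ⟨hak, ha0, ha1⟩ := mem_filter.1 ha
  rw [HasAntidiagonal.mem_antidiagonal] at hak
  rw [pow_two]
  exact Ideal.mul_mem_mul (I.mul_mem_left _ (hI a.1 ha0 ha1))
    (aeval_psum_mem (by omega) fun i hi0 hi ↦ hI i hi0 (by omega))

end Newton

section StrictMonoSum

open Finset Polynomial

variable {α K : Type*}

theorem sum_strictMono_prod [LinearOrder α] [Fintype α] [CommSemiring K] (s : Finset α)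
    (g : α → K) (l : ℕ) [DecidablePred fun k : Fin l → α ↦ StrictMono k ∧ ∀ i, k i ∈ s] :
    ∑ k : Fin l → α with StrictMono k ∧ ∀ i, k i ∈ s, ∏ i, g (k i) =
      ∑ t ∈ powersetCard l s, ∏ i ∈ t, g i := by
  symm
  refine sum_bij (fun t ht ↦ t.orderEmbOfFin (mem_powersetCard.1 ht).2) ?_ ?_ ?_ ?_
  · intro t ht
    simp only [mem_filter, mem_univ, true_and]
    exact ⟨OrderEmbedding.strictMono _,
      fun i ↦ (mem_powersetCard.1 ht).1 (orderEmbOfFin_mem _ _ i)⟩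
  · intro t ht u hu htu
    rw [← image_orderEmbOfFin_univ t (mem_powersetCard.1 ht).2, htu, image_orderEmbOfFin_univ]
  · intro k hk
    obtain ⟨hmono, hks⟩ := (mem_filter.1 hk).2
    have hcard : #(univ.image k) = l := by
      rw [card_image_of_injective _ hmono.injective, card_fin]
    refine ⟨univ.image k, mem_powersetCard.2 ⟨image_subset_iff.2 fun i _ ↦ hks i, hcard⟩, ?_⟩
    exact (orderEmbOfFin_unique hcard (fun i ↦ mem_image_of_mem k (mem_univ i)) hmono).symm
  · intro t ht
    conv_lhs => rw [← map_orderEmbOfFin_univ t (mem_powersetCard.1 ht).2, prod_map]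
    rfl

theorem sum_powersetCard_prod_inv_mul_prod [Field K] (s : Finset α) (r : α → K)
    (hr : ∀ i ∈ s, r i ≠ 0) (l : ℕ) :
    (∑ t ∈ powersetCard l s, ∏ i ∈ t, (r i)⁻¹) * ∏ i ∈ s, r i =
      (∏ i ∈ s, (X + C (r i))).coeff l := by
  classical
  have hcoeff (t : Finset α) : ((∏ _i ∈ t, X) * ∏ i ∈ s \ t, C (r i)).coeff l =
      if #t = l then ∏ i ∈ s \ t, r i else 0 := by
    rw [prod_const, ← map_prod, mul_comm, coeff_C_mul_X_pow]
    simp only [eq_comm]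
  have hprod (t : Finset α) (hts : t ⊆ s) :
      (∏ i ∈ t, (r i)⁻¹) * ∏ i ∈ s, r i = ∏ i ∈ s \ t, r i := by
    rw [← prod_sdiff hts, mul_left_comm, ← prod_mul_distrib,
      prod_eq_one fun i hi ↦ inv_mul_cancel₀ (hr i (hts hi)), mul_one]
  rw [prod_add, finsetSum_coeff, sum_mul, powersetCard_eq_filter, sum_filter]
  refine sum_congr rfl fun t ht ↦ ?_
  rw [hcoeff, hprod t (mem_powerset.1 ht)]

end StrictMonoSum

section RisingProd

open Finset Polynomial

section CommSemiring

variable {R : Type*} [CommSemiring R]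

variable (R) in
/-- The polynomial `(X + 1)(X + 2)⋯(X + n)`. Its coefficients are the elementary symmetric functions
of `1, …, n`; the one of `X ^ l` is `n!` times the multiple harmonic sum `H({1}^l; n)`. -/
noncomputable def risingProd (n : ℕ) : R[X] := ∏ k ∈ range n, (X + C ((k : R) + 1))

theorem map_risingProd {S : Type*} [CommSemiring S] (φ : R →+* S) (n : ℕ) :
    (risingProd R n).map φ = risingProd S n := by
  simp [risingProd, Polynomial.map_prod]

theorem risingProd_coeff_zero (n : ℕ) : (risingProd R n).coeff 0 = n.factorial := by
  simp [risingProd, coeff_zero_prod, ← prod_range_add_one_eq_factorial]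

end CommSemiring

variable {R : Type*} [CommRing R]

theorem risingProd_coeff_eq_aeval_esymm {n k : ℕ} (hk : k ≤ n) :
    (risingProd R n).coeff (n - k) =
      MvPolynomial.aeval (fun i : Fin n ↦ (i : R) + 1) (MvPolynomial.esymm (Fin n) ℤ k) := by
  have hcard : Multiset.card (univ : Finset (Fin n)).val = n := by simp
  rw [MvPolynomial.aeval_esymm_eq_multiset_esymm, risingProd,
    ← Fin.prod_univ_eq_prod_range (fun j ↦ X + C ((j : R) + 1))]
  refine (Multiset.prod_X_add_C_coeff' _ _ (hcard.symm ▸ n.sub_le k)).trans ?_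
  rw [hcard, Nat.sub_sub_self hk]

theorem sum_range_pow_sub_risingProd_coeff_mem_sq {n k : ℕ} (hk : 0 < k) (hkn : k ≤ n) {I : Ideal R}
    (hI : ∀ i, n - k < i → i < n → (risingProd R n).coeff i ∈ I) :
    ∑ j ∈ range (n + 1), (j : R) ^ k - (-1) ^ (k + 1) * k * (risingProd R n).coeff (n - k) ∈
      I ^ 2 := by
  have hpsum : MvPolynomial.aeval (fun i : Fin n ↦ (i : R) + 1) (MvPolynomial.psum (Fin n) ℤ k) =
      ∑ j ∈ range (n + 1), (j : R) ^ k := by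
    simp [MvPolynomial.psum, Fin.sum_univ_eq_sum_range (fun j ↦ ((j : R) + 1) ^ k), sum_range_succ',
      hk.ne']
  rw [risingProd_coeff_eq_aeval_esymm hkn, ← hpsum]
  refine aeval_psum_sub_esymm_mem_sq hk fun i hi0 hik ↦ ?_
  rw [← risingProd_coeff_eq_aeval_esymm (hik.le.trans hkn)]
  exact hI _ (by omega) (by omega)

theorem X_mul_mul_comp_neg_X_comp_neg_X (g : R[X]) :
    (X * (g * g.comp (-X))).comp (-X) = -(X * (g * g.comp (-X))) := by
  simp only [mul_comp, X_comp, comp_assoc, neg_comp, neg_neg, comp_X]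
  ring

theorem risingProd_two_mul_add_one (r : ℕ) :
    risingProd R (2 * r + 1) = (-1) ^ r *
      (X * (risingProd R r * (risingProd R r).comp (-X))).comp (X + C ((r : R) + 1)) := by
  have hlow : ∏ k ∈ range r, (X + C ((k : R) + 1)) =
      (-1) ^ r * ∏ k ∈ range r, (-(X + C ((r : R) + 1)) + C ((k : R) + 1)) := by
    have hneg := prod_neg (fun k : ℕ ↦ -(X + C ((r : R) + 1)) + C ((k : R) + 1)) (s := range r)
    rw [card_range] at hneg
    rw [← hneg, ← prod_range_reflect]
    refine prod_congr rfl fun k hk ↦ ?_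
    rw [Nat.sub_sub, Nat.cast_sub (by have := mem_range.1 hk; omega)]
    simp only [Nat.cast_add, Nat.cast_one, C_add, C_sub, C_1]
    ring
  have hhigh : ∏ k ∈ range r, (X + C (((r + 1 + k : ℕ) : R) + 1)) =
      ∏ k ∈ range r, (X + C ((r : R) + 1) + C ((k : R) + 1)) := by
    refine prod_congr rfl fun k _ ↦ ?_
    simp only [Nat.cast_add, Nat.cast_one, C_add, C_1]
    ring
  rw [show 2 * r + 1 = r + 1 + r by ring]
  simp only [risingProd, prod_range_add _ (r + 1), prod_range_succ, mul_comp, Polynomial.prod_comp,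
    add_comp, neg_comp, X_comp, C_comp]
  rw [hhigh]
  conv_lhs => rw [hlow]
  ring

theorem cube_dvd_risingProd_coeff_sub [IsDomain R] [CharZero R] {r l : ℕ} (hl : Even l) :
    ((r : R) + 1) ^ 3 ∣ (risingProd R (2 * r + 1)).coeff l - (-1) ^ r * ((r + 1) *
      ((l + 1) * (risingProd R r * (risingProd R r).comp (-X)).coeff l)) := by
  have h := cube_dvd_coeff_comp_X_add_C_sub
    (X_mul_mul_comp_neg_X_comp_neg_X (risingProd R r)) ((r : R) + 1) hl
  rw [coeff_X_mul] at h
  have hsign : ((-1) ^ r : R[X]) = C ((-1) ^ r) := by simp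
  rw [risingProd_two_mul_add_one, hsign, coeff_C_mul, ← mul_sub]
  exact h.mul_left _

end RisingProd

section ModPrime

open Finset Polynomial

variable {p : ℕ} [Fact p.Prime] {k : ℕ}

variable (p) in
theorem risingProd_zmod : risingProd (ZMod p) (p - 1) = X ^ (p - 1) - 1 := by
  have hp : 0 < p - 1 := Nat.sub_pos_of_lt (Fact.out (p := p.Prime)).one_lt
  have hcast (k : ℕ) (hk : k < p - 1) : (k : ZMod p) + 1 ≠ 0 := by
    rw [← Nat.cast_succ, Ne, ZMod.natCast_eq_zero_iff]
    exact Nat.not_dvd_of_pos_of_lt k.succ_pos (by omega)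
  have hmonic : (risingProd (ZMod p) (p - 1)).Monic :=
    monic_prod_of_monic _ _ fun k _ ↦ monic_X_add_C _
  have hdeg : (risingProd (ZMod p) (p - 1)).degree = (p - 1 : ℕ) := by
    rw [risingProd, degree_prod]
    simp only [degree_X_add_C, sum_const, card_range, nsmul_one]
  refine eq_of_degree_le_of_eval_index_eq (s := range (p - 1))
    (v := fun k : ℕ ↦ -((k : ZMod p) + 1)) ?_ ?_ ?_ ?_ ?_
  · intro i hi j hj hij
    simp only [neg_inj, add_left_inj] at hij
    have hi' : i < p := by have := mem_range.1 hi; omega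
    have hj' : j < p := by have := mem_range.1 hj; omega
    exact CharP.natCast_injOn_Iio (ZMod p) p hi' hj' hij
  · rw [hdeg, card_range]
  · rw [hdeg, ← C_1, degree_X_pow_sub_C hp]
  · rw [hmonic.leadingCoeff, ← C_1, leadingCoeff_X_pow_sub_C hp]
  · intro k hk
    rw [risingProd, eval_prod, prod_eq_zero hk (by simp), eval_sub, eval_pow, eval_X, eval_one,
      ZMod.pow_card_sub_one_eq_one (neg_ne_zero.2 (hcast k (mem_range.1 hk))), sub_self]

theorem prime_dvd_risingProd_coeff (hk0 : k ≠ 0) (hk : k < p - 1) :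
    (p : ℤ) ∣ (risingProd ℤ (p - 1)).coeff k := by
  rw [← ZMod.intCast_zmod_eq_zero_iff_dvd, ← eq_intCast (Int.castRingHom _), ← coeff_map,
    map_risingProd, risingProd_zmod]
  simp [coeff_X_pow, coeff_one, hk0, hk.ne]

variable (p) in
theorem prime_dvd_risingProd_coeff_zero_add_one : (p : ℤ) ∣ (risingProd ℤ (p - 1)).coeff 0 + 1 := by
  rw [risingProd_coeff_zero]
  simp [← ZMod.intCast_zmod_eq_zero_iff_dvd]

end ModPrime

section Congruences

open Finset
open Polynomial (X mul_coeff_zero)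

variable {p l : ℕ} [Fact p.Prime]

theorem succ_mul_risingProd_coeff_sub_mul_bernoulli_mem_padicBall (hl : Even l) (hl0 : l ≠ 0)
    (hlp : l + 1 < p) :
    ((l : ℚ) + 1) * (risingProd ℤ (p - 1)).coeff l - p * bernoulli (p - 1 - l) ∈
      padicBall p 2 := by
  set g : ℤ := (risingProd ℤ (p - 1)).coeff l with hg
  obtain ⟨m, hm⟩ : ∃ m, p = l + 1 + m := Nat.exists_eq_add_of_le hlp.le
  have hlm : p - 1 - l = m := by omega
  have hodd : Odd (m + 1) := by
    have := (Fact.out : p.Prime).odd_of_ne_two (by omega)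
    grind
  have hnewton : (p : ℤ) ^ 2 ∣ ∑ j ∈ range p, (j : ℤ) ^ m + m * g := by
    have h := sum_range_pow_sub_risingProd_coeff_mem_sq (n := p - 1) (k := m) (by omega) (by omega)
      (I := Ideal.span {(p : ℤ)}) fun i hi0 hi ↦
        Ideal.mem_span_singleton.2 (prime_dvd_risingProd_coeff (by omega) hi)
    rw [Ideal.span_singleton_pow, Ideal.mem_span_singleton, hodd.neg_one_pow,
      show p - 1 - m = l by omega, ← hg, Nat.sub_add_cancel (by omega)] at h
    simpa using h
  have hpg : (p : ℤ) ^ 2 ∣ p * g := by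
    rw [pow_two]
    exact mul_dvd_mul_left _ (prime_dvd_risingProd_coeff hl0 (by omega))
  have hfaulhaber := sum_range_pow_sub_mul_bernoulli_mem_padicBall (p := p) (m := m) (by omega)
  rw [hlm]
  convert add_mem (sub_mem hfaulhaber (intCast_mem_padicBall_iff.2 hnewton))
    (intCast_mem_padicBall_iff.2 hpg) using 1
  rw [hm]
  push_cast
  ring

theorem cube_dvd_risingProd_two_mul_sub_one_coeff_sub (hp2 : p ≠ 2) (hl : Even l) :
    (p : ℤ) ^ 3 ∣ (risingProd ℤ (2 * p - 1)).coeff l - p *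
      ((l + 1) * (risingProd ℤ (p - 1) * (risingProd ℤ (p - 1)).comp (-X)).coeff l) := by
  have hp : p.Prime := Fact.out
  have h := cube_dvd_risingProd_coeff_sub (R := ℤ) (r := p - 1) hl
  rw [(hp.even_sub_one hp2).neg_one_pow, one_mul, ← Nat.cast_succ, Nat.succ_eq_add_one,
    Nat.sub_add_cancel hp.one_le, show 2 * (p - 1) + 1 = 2 * p - 1 by have := hp.one_le; omega] at h
  exact h

theorem cube_dvd_risingProd_coeff_zero_sub_sq (hp2 : p ≠ 2) :
    (p : ℤ) ^ 3 ∣ (risingProd ℤ (2 * p - 1)).coeff 0 - p * (risingProd ℤ (p - 1)).coeff 0 ^ 2 := by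
  simpa [mul_coeff_zero, coeff_comp_neg_X, pow_two] using
    cube_dvd_risingProd_two_mul_sub_one_coeff_sub hp2 Even.zero

theorem cube_dvd_risingProd_coeff_sub_mul (hp2 : p ≠ 2) (hl : Even l) (hl0 : l ≠ 0) (hlp : l < p) :
    (p : ℤ) ^ 3 ∣ (risingProd ℤ (2 * p - 1)).coeff l -
      2 * p * (risingProd ℤ (p - 1)).coeff 0 * ((l + 1) * (risingProd ℤ (p - 1)).coeff l) := by
  have hsq := coeff_mul_comp_neg_X_sub_mem_sq (I := Ideal.span {(p : ℤ)})
    (f := risingProd ℤ (p - 1)) hl hl0 fun i hi0 hil ↦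
      Ideal.mem_span_singleton.2 (prime_dvd_risingProd_coeff hi0.ne' (by omega))
  rw [Ideal.span_singleton_pow, Ideal.mem_span_singleton] at hsq
  have hcube := (mul_dvd_mul_left (p : ℤ) hsq).mul_left (l + 1)
  rw [← pow_succ'] at hcube
  exact (dvd_add (cube_dvd_risingProd_two_mul_sub_one_coeff_sub hp2 hl) hcube).trans
    (dvd_of_eq (by ring))

end Congruences

section Mhs

open Finset Polynomial

theorem mhs_eq_sum_powersetCard {s : List ℕ} (hs : ∀ i, s.get i = 1) (n : ℕ) :
    mhs s n = ∑ t ∈ powersetCard s.length (Ioi (0 : Fin (n + 1))),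
      ∏ k ∈ t, ((k : ℕ) : ℚ)⁻¹ := by
  classical
  simp only [← sum_strictMono_prod, mhs, hs, pow_one, one_div, mem_Ioi, Nat.one_le_iff_ne_zero,
    Fin.val_ne_zero_iff, pos_iff_ne_zero]

theorem mhs_replicate_one_mul_factorial (l n : ℕ) :
    mhs (List.replicate l 1) n * n.factorial = (risingProd ℤ n).coeff l := by
  have h := sum_powersetCard_prod_inv_mul_prod (Ioi (0 : Fin (n + 1)))
    (fun k ↦ ((k : ℕ) : ℚ))
    (fun k hk ↦ Nat.cast_ne_zero.2 (Fin.val_ne_zero_iff.2 (mem_Ioi.1 hk).ne')) l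
  simp only [Fin.prod_Ioi_zero, Fin.val_succ,
    ← Nat.cast_prod, Fin.prod_univ_eq_prod_range (fun k ↦ k + 1),
    Fin.prod_univ_eq_prod_range (fun k ↦ X + C ((k + 1 : ℕ) : ℚ)),
    prod_range_add_one_eq_factorial] at h
  rw [mhs_eq_sum_powersetCard (by simp), List.length_replicate, h,
    ← eq_intCast (Int.castRingHom ℚ), ← coeff_map, map_risingProd, risingProd]
  simp only [Nat.cast_succ]

end Mhs

section Main

variable {p l : ℕ} [Fact p.Prime]

variable (p) in
theorem padicValRat_factorial_two_mul_sub_one :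
    padicValRat p ((2 * p - 1).factorial : ℚ) = 1 := by
  have hp : 0 < p := (Fact.out : p.Prime).pos
  rw [padicValRat.of_nat, show 2 * p - 1 = p * 1 + (p - 1) by omega,
    padicValNat_factorial_mul_add 1 (Nat.sub_lt hp one_pos), padicValNat_factorial_mul]
  simp

theorem risingProd_coeff_add_mul_bernoulli_mem_padicBall (hl : Even l) (hl0 : l ≠ 0)
    (hlp : l + 1 < p) :
    (risingProd ℤ (2 * p - 1)).coeff l +
      2 * p * bernoulli (p - 1 - l) * (risingProd ℤ (2 * p - 1)).coeff 0 ∈ padicBall p 3 := by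
  have hp2 : p ≠ 2 := by omega
  set B := bernoulli (p - 1 - l)
  set G := risingProd ℤ (p - 1)
  set P := risingProd ℤ (2 * p - 1)
  have hp1 : (p : ℚ) ∈ padicBall p 1 := prime_mem_padicBall_one
  have h2B : 2 * B ∈ padicBall p 0 :=
    mul_mem_padicBall (intCast_mem_padicBall_zero 2) (bernoulli_mem_padicBall_zero
      (Nat.not_dvd_of_pos_of_lt (by omega) (by omega)))
  have hcoeff : (P.coeff l - 2 * p * G.coeff 0 * ((l + 1) * G.coeff l) : ℚ) ∈ padicBall p 3 :=
    mod_cast intCast_mem_padicBall_iff.2 (cube_dvd_risingProd_coeff_sub_mul hp2 hl hl0 (by omega))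
  have hbern : ((l + 1) * G.coeff l - p * B : ℚ) ∈ padicBall p 2 :=
    succ_mul_risingProd_coeff_sub_mul_bernoulli_mem_padicBall hl hl0 hlp
  have hfact : (P.coeff 0 - p * G.coeff 0 ^ 2 : ℚ) ∈ padicBall p 3 :=
    mod_cast intCast_mem_padicBall_iff.2 (cube_dvd_risingProd_coeff_zero_sub_sq hp2)
  have hwilson : (G.coeff 0 + 1 : ℚ) ∈ padicBall p 1 :=
    mod_cast intCast_mem_padicBall_iff (n := 1).2
      (by simpa using prime_dvd_risingProd_coeff_zero_add_one p)
  have hG0 : (2 * G.coeff 0 : ℚ) ∈ padicBall p 0 := mod_cast intCast_mem_padicBall_zero _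
  have hsplit : (P.coeff l + 2 * p * B * P.coeff 0 : ℚ) =
      (P.coeff l - 2 * p * G.coeff 0 * ((l + 1) * G.coeff l)) +
        p * (2 * G.coeff 0) * ((l + 1) * G.coeff l - p * B) +
        p * (2 * B) * (P.coeff 0 - p * G.coeff 0 ^ 2) +
        p * (2 * B) * (p * G.coeff 0) * (G.coeff 0 + 1) := by ring
  rw [hsplit]
  have hp2B := mul_mem_padicBall hp1 h2B
  have hpG0 := mul_mem_padicBall hp1 (intCast_mem_padicBall_zero (G.coeff 0))
  have hbern' := mul_mem_padicBall (mul_mem_padicBall hp1 hG0) hbern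
  have hfact' := padicBall_antitone (show (3 : ℤ) ≤ 1 + 0 + 3 by norm_num)
    (mul_mem_padicBall hp2B hfact)
  have hwilson' := mul_mem_padicBall (mul_mem_padicBall hp2B hpG0) hwilson
  exact add_mem (add_mem (add_mem hcoeff hbern') hfact') hwilson'

theorem mhs_replicate_one_add_bernoulli_mem_padicBall (hl : Even l) (hl0 : l ≠ 0)
    (hlp : l + 1 < p) :
    mhs (List.replicate l 1) (2 * p - 1) + 2 * p * bernoulli (p - 1 - l) ∈ padicBall p 2 := by
  have hfact0 : ((2 * p - 1).factorial : ℚ) ≠ 0 := Nat.cast_ne_zero.2 (Nat.factorial_ne_zero _)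
  have hcoeff0 : ((2 * p - 1).factorial : ℚ) = (risingProd ℤ (2 * p - 1)).coeff 0 := by
    rw [risingProd_coeff_zero, Int.cast_natCast]
  rw [← mul_mem_padicBall_iff hfact0, padicValRat_factorial_two_mul_sub_one, add_mul,
    mhs_replicate_one_mul_factorial, hcoeff0]
  exact risingProd_coeff_add_mul_bernoulli_mem_padicBall hl hl0 hlp

end Main

/-- For even `l ≥ 2` and prime `p ≥ l+3`:
`H({1}^l; 2p-1) ≡ -2p·B_{p-l-1} (mod p²)`, i.e.
`v_p(H({1}^l;2p-1) + 2p·B_{p-l-1}) ≥ 2` (with `v_p(0) = ∞`); in particular `p`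
divides the numerator of `H({1}^l; 2p-1)`. -/
theorem stmt19 (l p : ℕ) (hl : 2 ≤ l) (hleven : Even l) (hp : p.Prime)
    (hple : l + 3 ≤ p) :
    (mhs (List.replicate l 1) (2 * p - 1) + 2 * p * bernoulli (p - l - 1) = 0 ∨
      2 ≤ padicValRat p
        (mhs (List.replicate l 1) (2 * p - 1) + 2 * p * bernoulli (p - l - 1))) ∧
    (p : ℤ) ∣ (mhs (List.replicate l 1) (2 * p - 1)).num := by
  have := Fact.mk hp
  have hmain : mhs (List.replicate l 1) (2 * p - 1) + 2 * p * bernoulli (p - l - 1) ∈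
      padicBall p 2 := by
    rw [Nat.sub_right_comm]
    exact mhs_replicate_one_add_bernoulli_mem_padicBall hleven (by omega) (by omega)
  have hbern : 2 * p * bernoulli (p - l - 1) ∈ padicBall p 1 :=
    mul_mem_padicBall (mul_mem_padicBall (m := 0) (n := 1) (intCast_mem_padicBall_zero 2)
      prime_mem_padicBall_one) (bernoulli_mem_padicBall_zero
        (Nat.not_dvd_of_pos_of_lt (by omega) (by omega)))
  refine ⟨mem_padicBall_iff.1 hmain, ?_⟩
  have hmhs : mhs (List.replicate l 1) (2 * p - 1) ∈ padicBall p 1 :=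
    (add_mem_cancel_right hbern).1 (padicBall_antitone one_le_two hmain)
  simpa using dvd_num_of_mem_padicBall (n := 1) hmhs
end
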